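/- arXiv:2010.07691 — 2 statements merged into one kernel-verified Lean document; each statement's English description precedes it below -/
import Mathlib

section
/- Let n ≥ 1, m ≥ 0, and let H₀, H₁, …, H_m : ℝⁿ × ℝⁿ → ℝ be twice continuously differentiable. Fix real numbers a₀, a₁, …, a_m (representing the time step Δt and the noise increments ΔL¹, …, ΔLᵐ). Let U ⊆ ℝⁿ × ℝⁿ be open and let φ : U → ℝⁿ × ℝⁿ be a continuously differentiable map such that for every (p,q) ∈ U, writing φ(p,q) = (P,Q), the semi-implicit symplectic Euler relations hold: P = p − Σ_{i=0}^{m} a_i ∂H_i/∂q (P, q) and Q = q + Σ_{i=0}^{m} a_i ∂H_i/∂p (P, q). Then for every (p,q) ∈ U the Jacobian matrix Dφ(p,q) is symplectic, i.e. Dφ(p,q)ᵀ J Dφ(p,q) = J; equivalently, the map φ preserves the canonical symplectic two-form dp ∧ dq. -/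
/-!
Adding the two Euler relations, paired with arbitrary directions, gives one identity of covectors
`∑ i, a i • dH i (P, q) = ⟨p - P, dq⟩ + ⟨dP, Q - q⟩`: the step is generated by a closed one-form in
the mixed variables `(P, q)`. Differentiating it along `φ` expresses the symmetric form
`b = ∑ i, a i • D²H i (P, q)` through `Dφ`, and the equation `b z z' = b z' z`, for the images
`z, z'` of two tangent vectors `u, v` in the mixed variables, is exactly the invariance of the
symplectic form on `u, v`.
-/

open Filter Topology

section Pairing

variable {𝕜 E F : Type*} [NontriviallyNormedField 𝕜]
  [NormedAddCommGroup E] [NormedSpace 𝕜 E] [NormedAddCommGroup F] [NormedSpace 𝕜 F]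

/-- The canonical alternating form `dp ∧ dq` on `E × F`, where momenta `p : E` and positions
`q : F` are paired by `B`. The pairing need not be perfect, so the form may be degenerate. -/
def pairingForm (B : E →L[𝕜] F →L[𝕜] 𝕜) (u v : E × F) : 𝕜 :=
  B u.1 v.2 - B v.1 u.2

/-- The step from `x = (p, q)` to `y = (P, Q)` is generated by the one-form `α` in the mixed
variables `(P, q)`: `α (P, q) = ⟨p - P, dq⟩ + ⟨dP, Q - q⟩`. For `α = dS` this is the relation
between a symplectic map and its generating function `S`, the identity being generated by `0`. -/
def IsGeneratedStep (B : E →L[𝕜] F →L[𝕜] 𝕜) (α : E × F → E × F →L[𝕜] 𝕜) (x y : E × F) : Prop :=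
  ∀ w : E × F, α (y.1, x.2) w = B (x.1 - y.1) w.2 + B w.1 (y.2 - x.2)

variable {B : E →L[𝕜] F →L[𝕜] 𝕜} {α : E × F → E × F →L[𝕜] 𝕜} {b : E × F →L[𝕜] E × F →L[𝕜] 𝕜}
  {φ : E × F → E × F} {L : E × F →L[𝕜] E × F} {x : E × F}

theorem IsGeneratedStep.apply_of_hasFDerivAt (hstep : ∀ᶠ y in 𝓝 x, IsGeneratedStep B α y (φ y))
    (hα : HasFDerivAt α b ((φ x).1, x.2)) (hφ : HasFDerivAt φ L x) (u w : E × F) :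
    b ((L u).1, u.2) w = B (u.1 - (L u).1) w.2 + B w.1 ((L u).2 - u.2) := by
  have hmixed : HasFDerivAt (fun y => ((φ y).1, y.2))
      (((ContinuousLinearMap.fst 𝕜 E F).comp L).prod (ContinuousLinearMap.snd 𝕜 E F)) x :=
    hφ.fst.prodMk hasFDerivAt_snd
  have hleft := (hα.comp x hmixed).clm_apply (hasFDerivAt_const w x)
  have hright := ((B.flip w.2).hasFDerivAt.comp x (hasFDerivAt_fst.sub hφ.fst)).add
    ((B w.1).hasFDerivAt.comp x (hφ.snd.sub hasFDerivAt_snd))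
  have hderiv := hleft.unique (hright.congr_of_eventuallyEq (hstep.mono fun y hy => hy w))
  simpa using congrArg (· u) hderiv

theorem IsGeneratedStep.pairingForm_eq_of_hasFDerivAt
    (hstep : ∀ᶠ y in 𝓝 x, IsGeneratedStep B α y (φ y))
    (hα : HasFDerivAt α b ((φ x).1, x.2)) (hb : ∀ z w, b z w = b w z)
    (hφ : HasFDerivAt φ L x) (u v : E × F) :
    pairingForm B (L u) (L v) = pairingForm B u v := by
  have hsymm := hb ((L u).1, u.2) ((L v).1, v.2)
  simp only [apply_of_hasFDerivAt hstep hα hφ, map_sub, sub_apply] at hsymm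
  simp only [pairingForm]
  linear_combination -hsymm

theorem fderiv_prod_apply_eq_add {G : Type*} [NormedAddCommGroup G] [NormedSpace 𝕜 G]
    {f : E × F → G} {z : E × F} (hf : DifferentiableAt 𝕜 f z) (w : E × F) :
    fderiv 𝕜 f z w =
      fderiv 𝕜 (fun p => f (p, z.2)) z.1 w.1 + fderiv 𝕜 (fun q => f (z.1, q)) z.2 w.2 := by
  have hp : HasFDerivAt (fun p => f (p, z.2)) _ z.1 :=
    hf.hasFDerivAt.comp z.1 (hasFDerivAt_prodMk_left z.1 z.2)
  have hq : HasFDerivAt (fun q => f (z.1, q)) _ z.2 :=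
    hf.hasFDerivAt.comp z.2 (hasFDerivAt_prodMk_right z.1 z.2)
  simp [hp.fderiv, hq.fderiv, ← map_add]

variable {ι : Type*} [Fintype ι] {H : ι → E × F → 𝕜} {a : ι → 𝕜}

theorem isGeneratedStep_sum_fderiv {x y : E × F}
    (hH : ∀ i, DifferentiableAt 𝕜 (H i) (y.1, x.2))
    (hP : B y.1 = B x.1 - ∑ i, a i • fderiv 𝕜 (fun q => H i (y.1, q)) x.2)
    (hQ : B.flip y.2 = B.flip x.2 + ∑ i, a i • fderiv 𝕜 (fun p => H i (p, x.2)) y.1) :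
    IsGeneratedStep B (fun z => ∑ i, a i • fderiv 𝕜 (H i) z) x y := by
  intro w
  have hPw : B y.1 w.2 = B x.1 w.2 - ∑ i, a i * fderiv 𝕜 (fun q => H i (y.1, q)) x.2 w.2 := by
    simpa using congrArg (· w.2) hP
  have hQw : B w.1 y.2 = B w.1 x.2 + ∑ i, a i * fderiv 𝕜 (fun p => H i (p, x.2)) y.1 w.1 := by
    simpa using congrArg (· w.1) hQ
  simp only [sum_apply, smul_apply, smul_eq_mul,
    fderiv_prod_apply_eq_add (hH _), mul_add, Finset.sum_add_distrib, map_sub,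
    sub_apply]
  linear_combination hPw - hQw

theorem semi_implicit_euler_symplectic_general
    (hH : ∀ i, ContDiffAt 𝕜 (minSmoothness 𝕜 2) (H i) ((φ x).1, x.2))
    (hφ : DifferentiableAt 𝕜 φ x)
    (hP : ∀ᶠ y in 𝓝 x,
      B (φ y).1 = B y.1 - ∑ i, a i • fderiv 𝕜 (fun q => H i ((φ y).1, q)) y.2)
    (hQ : ∀ᶠ y in 𝓝 x,
      B.flip (φ y).2 = B.flip y.2 + ∑ i, a i • fderiv 𝕜 (fun p => H i (p, y.2)) (φ y).1)
    (u v : E × F) :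
    pairingForm B (fderiv 𝕜 φ x u) (fderiv 𝕜 φ x v) = pairingForm B u v := by
  have hH_two : ∀ i, ContDiffAt 𝕜 2 (H i) ((φ x).1, x.2) := fun i => (hH i).of_le le_minSmoothness
  have hmixed : Tendsto (fun y => ((φ y).1, y.2)) (𝓝 x) (𝓝 ((φ x).1, x.2)) :=
    hφ.continuousAt.fst.prodMk continuousAt_snd
  have hdiff : ∀ᶠ y in 𝓝 x, ∀ i, DifferentiableAt 𝕜 (H i) ((φ y).1, y.2) :=
    eventually_all.2 fun i => hmixed.eventually <|
      ((hH_two i).eventually (by simp)).mono fun _ hz => hz.differentiableAt (by simp)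
  have hstep : ∀ᶠ y in 𝓝 x, IsGeneratedStep B (fun z => ∑ i, a i • fderiv 𝕜 (H i) z) y (φ y) := by
    filter_upwards [hdiff, hP, hQ] with y using isGeneratedStep_sum_fderiv
  have hα : HasFDerivAt (fun z => ∑ i, a i • fderiv 𝕜 (H i) z)
      (∑ i, a i • fderiv 𝕜 (fderiv 𝕜 (H i)) ((φ x).1, x.2)) ((φ x).1, x.2) :=
    HasFDerivAt.fun_sum fun i _ =>
      (((hH_two i).fderiv_right (m := 1) (by norm_num)).differentiableAt
        (by simp)).hasFDerivAt.const_smul (a i)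
  refine IsGeneratedStep.pairingForm_eq_of_hasFDerivAt hstep hα (fun z w => ?_) hφ.hasFDerivAt u v
  simp only [sum_apply, smul_apply, ((hH _).isSymmSndFDerivAt le_rfl).eq z w]

end Pairing

section Coordinates

variable {𝕜 κ : Type*} [NontriviallyNormedField 𝕜] [CompleteSpace 𝕜] [Fintype κ]

variable (𝕜 κ) in
/-- The dot product on `κ → 𝕜` as a continuous pairing, which makes `pairingForm` the standard
symplectic form with matrix `J`. -/
noncomputable def dotProductPairing : (κ → 𝕜) →L[𝕜] (κ → 𝕜) →L[𝕜] 𝕜 :=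
  (dotProductBilin 𝕜 𝕜).toContinuousBilinearMap

theorem dotProductPairing_apply (p q : κ → 𝕜) : dotProductPairing 𝕜 κ p q = p ⬝ᵥ q := rfl

theorem pairingForm_dotProductPairing (u v : (κ → 𝕜) × (κ → 𝕜)) :
    pairingForm (dotProductPairing 𝕜 κ) u v = ∑ j, (u.1 j * v.2 j - u.2 j * v.1 j) := by
  simp only [pairingForm, dotProductPairing_apply, dotProduct, Finset.sum_sub_distrib,
    mul_comm (v.1 _)]

theorem dotProductPairing_flip : (dotProductPairing 𝕜 κ).flip = dotProductPairing 𝕜 κ := by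
  ext p q
  exact dotProduct_comm _ _

theorem dotProductPairing_eq_iff [DecidableEq κ] {p : κ → 𝕜} {l : (κ → 𝕜) →L[𝕜] 𝕜} :
    dotProductPairing 𝕜 κ p = l ↔ ∀ j, p j = l (Pi.single j 1) := by
  simp [← ContinuousLinearMap.coe_inj, LinearMap.pi_ext'_iff, LinearMap.ext_ring_iff,
    dotProductPairing_apply]

end Coordinates

/-- The semi-implicit (symplectic) Euler map
`(p, q) ↦ (P, Q)` defined implicitly by
`P = p − Σᵢ aᵢ ∂Hᵢ/∂q (P, q)` and `Q = q + Σᵢ aᵢ ∂Hᵢ/∂p (P, q)`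
has a symplectic Jacobian at every point of the open set `U`:
`Dφ(x)ᵀ J Dφ(x) = J`, expressed here as the invariance of the canonical
symplectic bilinear form `ω(u, v) = Σⱼ (u₁ⱼ v₂ⱼ − u₂ⱼ v₁ⱼ)` under `Dφ(x)`. -/
theorem semi_implicit_euler_symplectic
    (n m : ℕ) (hn : 1 ≤ n)
    (H : Fin (m + 1) → (Fin n → ℝ) × (Fin n → ℝ) → ℝ)
    (hH : ∀ i, ContDiff ℝ 2 (H i))
    (a : Fin (m + 1) → ℝ)
    (U : Set ((Fin n → ℝ) × (Fin n → ℝ))) (hU : IsOpen U)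
    (φ : (Fin n → ℝ) × (Fin n → ℝ) → (Fin n → ℝ) × (Fin n → ℝ))
    (hφ : ContDiffOn ℝ 1 φ U)
    (hrel : ∀ x ∈ U,
      (∀ j : Fin n, (φ x).1 j =
        x.1 j - ∑ i, a i *
          fderiv ℝ (fun y : Fin n → ℝ => H i ((φ x).1, y)) x.2 (Pi.single j 1)) ∧
      (∀ j : Fin n, (φ x).2 j =
        x.2 j + ∑ i, a i *
          fderiv ℝ (fun y : Fin n → ℝ => H i (y, x.2)) (φ x).1 (Pi.single j 1))) :
    ∀ x ∈ U, ∀ u v : (Fin n → ℝ) × (Fin n → ℝ),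
      ∑ j, ((fderiv ℝ φ x u).1 j * (fderiv ℝ φ x v).2 j
            - (fderiv ℝ φ x u).2 j * (fderiv ℝ φ x v).1 j)
        = ∑ j, (u.1 j * v.2 j - u.2 j * v.1 j) := by
  intro x hx u v
  have hUx : U ∈ 𝓝 x := hU.mem_nhds hx
  simpa only [pairingForm_dotProductPairing] using
    semi_implicit_euler_symplectic_general (B := dotProductPairing ℝ (Fin n)) (a := a)
      (fun i => by simpa using (hH i).contDiffAt)
      ((hφ.contDiffAt hUx).differentiableAt one_ne_zero)
      (eventually_of_mem hUx fun y hy => by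
        simpa [dotProductPairing_eq_iff, dotProductPairing_apply] using (hrel y hy).1)
      (eventually_of_mem hUx fun y hy => by
        simpa [dotProductPairing_flip, dotProductPairing_eq_iff, dotProductPairing_apply]
          using (hrel y hy).2)
      u v
end

section
/- Let c ∈ ℝ with |c| < 2, and let (P_j, Q_j)_{j≥0} satisfy the symplectic Euler recursion P_{j+1} = P_j − c Q_j, Q_{j+1} = Q_j + c P_{j+1}. Then for every N ≥ 0, P_N² + Q_N² ≤ ((2 + |c|)/(2 − |c|)) (P_0² + Q_0²). In particular, the numerical Hamiltonian P_N² + Q_N² remains bounded uniformly in N, oscillating within a factor of its initial value. -/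
section CommRing

variable {R : Type*} [CommRing R]

/-- The modified Hamiltonian `G_c(p, q) = p² + q² - c p q` of the Kubo oscillator: the perturbation
of the Hamiltonian `p² + q²` that a symplectic Euler step with parameter `c` conserves exactly. -/
def modifiedHamiltonian (c p q : R) : R :=
  p ^ 2 + q ^ 2 - c * p * q

theorem modifiedHamiltonian_symplecticEuler_step (c p q : R) :
    modifiedHamiltonian c (p - c * q) (q + c * (p - c * q)) = modifiedHamiltonian c p q := by
  unfold modifiedHamiltonian
  ring

theorem modifiedHamiltonian_symplecticEuler_eq_initial {c : R} {P Q : ℕ → R}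
    (hP : ∀ j, P (j + 1) = P j - c * Q j) (hQ : ∀ j, Q (j + 1) = Q j + c * P (j + 1)) (N : ℕ) :
    modifiedHamiltonian c (P N) (Q N) = modifiedHamiltonian c (P 0) (Q 0) := by
  induction N with
  | zero => rfl
  | succ j ih => rw [hQ, hP, modifiedHamiltonian_symplecticEuler_step, ih]

end CommRing

section LinearOrder

variable {R : Type*} [CommRing R] [LinearOrder R] [IsStrictOrderedRing R]

theorem two_mul_abs_mul_mul_le (c p q : R) : 2 * |c * p * q| ≤ |c| * (p ^ 2 + q ^ 2) :=
  calc 2 * |c * p * q| = |c| * (2 * |p| * |q|) := by rw [abs_mul, abs_mul]; ring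
    _ ≤ |c| * (|p| ^ 2 + |q| ^ 2) :=
      mul_le_mul_of_nonneg_left (two_mul_le_add_sq |p| |q|) (abs_nonneg c)
    _ = |c| * (p ^ 2 + q ^ 2) := by rw [sq_abs, sq_abs]

theorem two_sub_abs_mul_le_two_mul_modifiedHamiltonian (c p q : R) :
    (2 - |c|) * (p ^ 2 + q ^ 2) ≤ 2 * modifiedHamiltonian c p q := by
  unfold modifiedHamiltonian
  linarith [two_mul_abs_mul_mul_le c p q, le_abs_self (c * p * q)]

theorem two_mul_modifiedHamiltonian_le_two_add_abs_mul (c p q : R) :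
    2 * modifiedHamiltonian c p q ≤ (2 + |c|) * (p ^ 2 + q ^ 2) := by
  unfold modifiedHamiltonian
  linarith [two_mul_abs_mul_mul_le c p q, neg_abs_le (c * p * q)]

theorem symplectic_euler_hamiltonian_bounded_general {c : R} {P Q : ℕ → R}
    (hP : ∀ j, P (j + 1) = P j - c * Q j) (hQ : ∀ j, Q (j + 1) = Q j + c * P (j + 1)) (N : ℕ) :
    (2 - |c|) * (P N ^ 2 + Q N ^ 2) ≤ (2 + |c|) * (P 0 ^ 2 + Q 0 ^ 2) :=
  calc (2 - |c|) * (P N ^ 2 + Q N ^ 2)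
    _ ≤ 2 * modifiedHamiltonian c (P N) (Q N) :=
      two_sub_abs_mul_le_two_mul_modifiedHamiltonian c (P N) (Q N)
    _ = 2 * modifiedHamiltonian c (P 0) (Q 0) := by
      rw [modifiedHamiltonian_symplecticEuler_eq_initial hP hQ]
    _ ≤ (2 + |c|) * (P 0 ^ 2 + Q 0 ^ 2) :=
      two_mul_modifiedHamiltonian_le_two_add_abs_mul c (P 0) (Q 0)

end LinearOrder

/-- for `|c| < 2`, the symplectic Euler recursion
`P_{j+1} = P_j − c Q_j`, `Q_{j+1} = Q_j + c P_{j+1}` keeps the numerical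
Hamiltonian uniformly bounded:
`P_N² + Q_N² ≤ ((2 + |c|)/(2 − |c|)) (P_0² + Q_0²)` for every `N`. -/
theorem symplectic_euler_hamiltonian_bounded
    (c : ℝ) (hc : |c| < 2) (P Q : ℕ → ℝ)
    (hP : ∀ j, P (j + 1) = P j - c * Q j)
    (hQ : ∀ j, Q (j + 1) = Q j + c * P (j + 1)) :
    ∀ N, P N ^ 2 + Q N ^ 2 ≤ ((2 + |c|) / (2 - |c|)) * (P 0 ^ 2 + Q 0 ^ 2) := by
  intro N
  rw [div_mul_eq_mul_div, le_div_iff₀' (sub_pos.mpr hc)]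
  exact symplectic_euler_hamiltonian_bounded_general hP hQ N
end
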